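/- Let n ≥ 0, s > 2, and let q₀, q₁ be points on the unit sphere S^{2n+1} ⊂ ℂ^{n+1} with |⟨q₀, q₁⟩| > sqrt(1 − 4/s²). Then q₀ and q₁ are connected by a unit-speed magnetic geodesic of strength s: there exist ψ ∈ [0,π], a unit-speed magnetic geodesic γ of strength s with contact angle ψ, and t₀, t₁ ∈ ℝ with γ(t₀) = q₀ and γ(t₁) = q₁. (Unit-speed strength s corresponds to kinetic energy k = 1/(2s²) < 1/8, and sqrt(1 − 4/s²) = sqrt(1 − 8k).) -/

import Mathlib

noncomputable section

open scoped Real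

/-- Hermitian product on `ℂ^{n+1}`, ℂ-linear in the first argument and
conjugate-linear in the second (paper convention). -/
def herm {n : ℕ} (x y : EuclideanSpace ℂ (Fin (n + 1))) : ℂ := inner ℂ y x

/-- Norm of the point `C_s(ψ) = (−s/2 + cos ψ, sin ψ) ∈ ℝ²`, i.e.
`|C_s(ψ)| = sqrt(s²/4 + 1 − s cos ψ)`. -/
def normC (s ψ : ℝ) : ℝ := Real.sqrt (s ^ 2 / 4 + 1 - s * Real.cos ψ)

/-- Angle of `C_s(ψ)` with the positive x-axis: the unique `τ ∈ [0,π]` with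
`cos τ = (−s/2 + cos ψ)/|C_s(ψ)|`. -/
def argC (s ψ : ℝ) : ℝ := Real.arccos ((-s / 2 + Real.cos ψ) / normC s ψ)

/-- `γ` is a unit-speed magnetic geodesic of strength `s` with contact angle `ψ`,
in the paper's ambient-space formulation: `γ'' − i·s·γ' + (1 − s·cos ψ)·γ = 0`,
`|γ(0)| = 1`, `|γ'(0)| = 1`, `Re⟨γ(0),γ'(0)⟩ = 0`, `Re⟨i·γ(0),γ'(0)⟩ = cos ψ`. -/
def IsMagGeo {n : ℕ} (s ψ : ℝ) (γ : ℝ → EuclideanSpace ℂ (Fin (n + 1))) : Prop :=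
  ContDiff ℝ (⊤ : ℕ∞) γ ∧
  (∀ t : ℝ, deriv (deriv γ) t - ((s : ℂ) * Complex.I) • deriv γ t
      + ((1 : ℂ) - (s : ℂ) * (Real.cos ψ : ℂ)) • γ t = 0) ∧
  ‖γ 0‖ = 1 ∧ ‖deriv γ 0‖ = 1 ∧ (herm (γ 0) (deriv γ 0)).re = 0 ∧
  (herm (Complex.I • γ 0) (deriv γ 0)).re = Real.cos ψ

/-- The curve `γ(t) = e^{i s t/2}(e^{−i|C_s(ψ)|t} w₀ + e^{i|C_s(ψ)|t} w₁)`. -/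
def magCurve {n : ℕ} (s ψ : ℝ) (w₀ w₁ : EuclideanSpace ℂ (Fin (n + 1))) (t : ℝ) :
    EuclideanSpace ℂ (Fin (n + 1)) :=
  Complex.exp (Complex.I * s * t / 2) •
    (Complex.exp (-(Complex.I * normC s ψ * t)) • w₀ +
     Complex.exp (Complex.I * normC s ψ * t) • w₁)

/-- The Clifford torus `𝕋²_{w₀,w₁} = {λ₀ w₀ + λ₁ w₁ : |λ₀| = |λ₁| = 1}`. -/
def cliffordTorus {n : ℕ} (w₀ w₁ : EuclideanSpace ℂ (Fin (n + 1))) :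
    Set (EuclideanSpace ℂ (Fin (n + 1))) :=
  {x | ∃ l₀ l₁ : ℂ, ‖l₀‖ = 1 ∧ ‖l₁‖ = 1 ∧ x = l₀ • w₀ + l₁ • w₁}

/-!
In the notation of the definitions above, `C_s(ψ)` runs through the unit circle about `(-s/2, 0)`.
Write `C = |C_s(ψ)|` and let `τ` be the argument of `C_s(ψ)`. For orthogonal `w₀`, `w₁` of norms
`sin (τ/2)`, `cos (τ/2)` the curve `magCurve s ψ w₀ w₁` is a magnetic geodesic `γ`, and the inner
product of `γ(0)` and `γ(t)` is `exp (i s t / 2) (cos (C t) + i cos τ sin (C t))`. Conversely `q₀`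
and `q₁` can be placed at times `0` and `t` on such a curve as soon as their inner product `a`, with
`|a| < 1`, has this value.

The modulus of this expression is `√(1 - sin² τ sin² (C t))`. The largest value of `sin τ` is `2/s`,
attained where the ray from the origin is tangent to the circle, at `cos ψ = 2/s`; so for `ψ` in
an interval ending there the modulus is `|a|` at the times `t = (x + 2πk) / C`, for a suitable
`x = x(ψ)` and every `k : ℕ`. Since `C` is not constant on the interval, for large `k` the phase
`s t / 2` turns by more than `2π` as `ψ` varies, and the intermediate value theorem provides the
phase of `a`. If `|a| = 1` then `q₀` and `q₁` lie on one Hopf circle, which is the geodesic with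
`ψ = 0`.
-/

theorem exists_nat_mul_add_eq_add_int_mul {X : Type*} [TopologicalSpace X] {S : Set X}
    (hS : IsPreconnected S) {A B : X → ℝ} (hA : ContinuousOn A S) (hB : ContinuousOn B S)
    {x y : X} (hx : x ∈ S) (hy : y ∈ S) (hxy : B y < B x) {T : ℝ} (hT : 0 < T) (θ : ℝ) :
    ∃ (k : ℕ) (m : ℤ), ∃ z ∈ S, A z + k * B z = θ + m * T := by
  obtain ⟨k, hk⟩ := exists_nat_gt ((T + A y - A x) / (B x - B y))
  rw [div_lt_iff₀ (sub_pos.2 hxy)] at hk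
  obtain ⟨m, ⟨hm_le, hm_lt⟩, -⟩ := existsUnique_add_zsmul_mem_Ico hT θ (A y + k * B y)
  rw [zsmul_eq_mul] at hm_le hm_lt
  obtain ⟨z, hz, hzm⟩ := hS.intermediate_value hy hx (hA.add (continuousOn_const.mul hB))
    ⟨hm_le, show θ + m * T ≤ A x + k * B x by linarith⟩
  exact ⟨k, m, z, hz, hzm⟩

theorem exists_exp_add_nat_mul_mul_eq {X : Type*} [TopologicalSpace X] {S : Set X}
    (hS : IsPreconnected S) {A B : X → ℝ} (hA : ContinuousOn A S) (hB : ContinuousOn B S)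
    {x y : X} (hx : x ∈ S) (hy : y ∈ S) (hxy : B y < B x) {u : X → ℂ} (hu : ContinuousOn u S)
    (hslit : ∀ z ∈ S, u z ∈ Complex.slitPlane) {a : ℂ} (hnorm : ∀ z ∈ S, ‖u z‖ = ‖a‖) :
    ∃ k : ℕ, ∃ z ∈ S, Complex.exp (((A z + k * B z : ℝ) : ℂ) * Complex.I) * u z = a := by
  have harg : ContinuousOn (fun z => (u z).arg) S := fun z hz =>
    (Complex.continuousAt_arg (hslit z hz)).comp_continuousWithinAt (hu z hz)
  obtain ⟨k, m, z, hz, hphase⟩ := exists_nat_mul_add_eq_add_int_mul hS (hA.add harg) hB hx hy hxy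
    Real.two_pi_pos a.arg
  have hphase' : A z + k * B z + (u z).arg = a.arg + m * (2 * π) := by
    rw [← hphase, Pi.add_apply]; ring
  refine ⟨k, z, hz, ?_⟩
  calc Complex.exp (((A z + k * B z : ℝ) : ℂ) * Complex.I) * u z
      = ‖a‖ * Complex.exp (((A z + k * B z + (u z).arg : ℝ) : ℂ) * Complex.I) := by
        rw [← hnorm z hz]
        nth_rw 1 [← Complex.norm_mul_exp_arg_mul_I (u z)]
        rw [mul_left_comm, ← Complex.exp_add, ← add_mul, ← Complex.ofReal_add]
    _ = ‖a‖ * Complex.exp (a.arg * Complex.I + m * (2 * π * Complex.I)) := by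
        rw [hphase']; push_cast; ring_nf
    _ = a := by rw [Complex.exp_periodic.int_mul m, Complex.norm_mul_exp_arg_mul_I]

section InnerProductSpace

open scoped InnerProductSpace ComplexConjugate

variable {𝕜 E : Type*} [RCLike 𝕜] [NormedAddCommGroup E] [InnerProductSpace 𝕜 E]

theorem inner_smul_add_smul_of_inner_eq_zero {w₀ w₁ : E} (h : ⟪w₀, w₁⟫_𝕜 = 0) (a b c d : 𝕜) :
    ⟪a • w₀ + b • w₁, c • w₀ + d • w₁⟫_𝕜
      = conj a * c * (‖w₀‖ : 𝕜) ^ 2 + conj b * d * (‖w₁‖ : 𝕜) ^ 2 := by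
  simp only [inner_add_left, inner_add_right, inner_smul_left, inner_smul_right, h,
    inner_eq_zero_symm.1 h, inner_self_eq_norm_sq_to_K]
  ring

theorem norm_sq_smul_add_smul_of_inner_eq_zero {w₀ w₁ : E} (h : ⟪w₀, w₁⟫_𝕜 = 0) (a b : 𝕜) :
    ‖a • w₀ + b • w₁‖ ^ 2 = ‖a‖ ^ 2 * ‖w₀‖ ^ 2 + ‖b‖ ^ 2 * ‖w₁‖ ^ 2 := by
  have hinner := inner_smul_add_smul_of_inner_eq_zero h a b a b
  rw [inner_self_eq_norm_sq_to_K, RCLike.conj_mul, RCLike.conj_mul] at hinner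
  exact_mod_cast hinner

theorem exists_norm_eq_one_smul_eq {q₀ q₁ : E} (hq₀ : ‖q₀‖ = 1) (hq₁ : ‖q₁‖ = 1)
    (h : ‖⟪q₀, q₁⟫_𝕜‖ = 1) : ∃ c : 𝕜, ‖c‖ = 1 ∧ c • q₀ = q₁ := by
  have hq₀_ne : q₀ ≠ 0 := norm_ne_zero_iff.1 (by simp [hq₀])
  have hq₁_ne : q₁ ≠ 0 := norm_ne_zero_iff.1 (by simp [hq₁])
  obtain ⟨c, -, rfl⟩ := (norm_inner_eq_norm_iff (𝕜 := 𝕜) hq₀_ne hq₁_ne).1 (by simp [h, hq₀, hq₁])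
  exact ⟨c, by simpa [norm_smul, hq₀] using hq₁, rfl⟩

theorem inner_smul_sub_sub_smul_eq_zero {q₀ q₁ : E} (hq₀ : ‖q₀‖ = 1) (hq₁ : ‖q₁‖ = 1)
    {l₀ l₁ : 𝕜} (hl₀ : ‖l₀‖ = 1) (hl₁ : ‖l₁‖ = 1) {α β : ℝ} (hαβ : α + β = 1)
    (hq : ⟪q₀, q₁⟫_𝕜 = α * l₀ + β * l₁) : ⟪l₁ • q₀ - q₁, q₁ - l₀ • q₀⟫_𝕜 = 0 := by
  have hq' : ⟪q₁, q₀⟫_𝕜 = α * conj l₀ + β * conj l₁ := by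
    rw [← inner_conj_symm, hq]; simp
  have hl₀' : conj l₀ * l₀ = 1 := by rw [RCLike.conj_mul, hl₀]; simp
  have hl₁' : conj l₁ * l₁ = 1 := by rw [RCLike.conj_mul, hl₁]; simp
  have hαβ' : (α : 𝕜) + β = 1 := by exact_mod_cast hαβ
  simp only [inner_sub_left, inner_sub_right, inner_smul_left, inner_smul_right, hq, hq',
    inner_self_eq_norm_sq_to_K, hq₀, hq₁, RCLike.ofReal_one]
  linear_combination (α : 𝕜) * hl₀' + (β : 𝕜) * hl₁' + (conj l₁ * l₀ + 1) * hαβ'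

theorem exists_orthogonal_add_eq_smul_add_smul_eq {q₀ q₁ : E} (hq₀ : ‖q₀‖ = 1) (hq₁ : ‖q₁‖ = 1)
    {l₀ l₁ : 𝕜} (hl₀ : ‖l₀‖ = 1) (hl₁ : ‖l₁‖ = 1) (hl : l₀ ≠ l₁) {α β : ℝ} (hαβ : α + β = 1)
    (hq : ⟪q₀, q₁⟫_𝕜 = α * l₀ + β * l₁) :
    ∃ w₀ w₁ : E, ⟪w₀, w₁⟫_𝕜 = 0 ∧ ‖w₀‖ ^ 2 = α ∧ ‖w₁‖ ^ 2 = β ∧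
      w₀ + w₁ = q₀ ∧ l₀ • w₀ + l₁ • w₁ = q₁ := by
  have hsub : l₁ - l₀ ≠ 0 := sub_ne_zero.2 hl.symm
  set w₀ : E := (l₁ - l₀)⁻¹ • (l₁ • q₀ - q₁) with hw₀
  set w₁ : E := (l₁ - l₀)⁻¹ • (q₁ - l₀ • q₀) with hw₁
  have hw : ⟪w₀, w₁⟫_𝕜 = 0 := by
    simp only [hw₀, hw₁, inner_smul_left, inner_smul_right,
      inner_smul_sub_sub_smul_eq_zero hq₀ hq₁ hl₀ hl₁ hαβ hq, mul_zero]
  have hadd : w₀ + w₁ = q₀ := by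
    rw [hw₀, hw₁, ← smul_add, sub_add_sub_cancel, ← sub_smul, inv_smul_smul₀ hsub]
  have hsmul_add : l₀ • w₀ + l₁ • w₁ = q₁ := by
    rw [hw₀, hw₁, smul_comm l₀, smul_comm l₁, ← smul_add, inv_smul_eq_iff₀ hsub]
    module
  have hnorm_add : ‖w₀‖ ^ 2 + ‖w₁‖ ^ 2 = 1 := by
    simpa [hadd, hq₀] using (norm_sq_smul_add_smul_of_inner_eq_zero hw 1 1).symm
  have hinner : l₀ * (‖w₀‖ : 𝕜) ^ 2 + l₁ * (‖w₁‖ : 𝕜) ^ 2 = α * l₀ + β * l₁ := by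
    simpa [hadd, hsmul_add, hq] using (inner_smul_add_smul_of_inner_eq_zero hw 1 1 l₀ l₁).symm
  have hnorm₀ : ‖w₀‖ ^ 2 = α := by
    have hcast : (‖w₀‖ : 𝕜) ^ 2 + (‖w₁‖ : 𝕜) ^ 2 = α + β := by
      exact_mod_cast hnorm_add.trans hαβ.symm
    have : (‖w₀‖ : 𝕜) ^ 2 = α :=
      mul_left_cancel₀ hsub (by linear_combination l₁ * hcast - hinner)
    exact_mod_cast this
  exact ⟨w₀, w₁, hw, hnorm₀, by linarith, hadd, hsmul_add⟩

end InnerProductSpace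

theorem normC_nonneg (s ψ : ℝ) : 0 ≤ normC s ψ :=
  Real.sqrt_nonneg _

theorem normC_sq (s ψ : ℝ) : normC s ψ ^ 2 = s ^ 2 / 4 + 1 - s * Real.cos ψ := by
  refine Real.sq_sqrt ?_
  nlinarith [sq_nonneg (Real.cos ψ - s / 2), Real.cos_sq_le_one ψ]

theorem normC_pos {s : ℝ} (hs : 2 < s) (ψ : ℝ) : 0 < normC s ψ :=
  Real.sqrt_pos.2 (by nlinarith [Real.cos_le_one ψ])

theorem continuous_normC (s : ℝ) : Continuous (normC s) := by
  unfold normC; fun_prop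

theorem strictMonoOn_normC {s : ℝ} (hs : 0 < s) : StrictMonoOn (normC s) (Set.Icc 0 π) := by
  intro ψ hψ φ hφ hlt
  refine lt_of_pow_lt_pow_left₀ 2 (normC_nonneg _ _) ?_
  rw [normC_sq, normC_sq]
  gcongr
  exact Real.strictAntiOn_cos hψ hφ hlt

theorem continuous_argC {s : ℝ} (hs : 2 < s) : Continuous (argC s) :=
  Real.continuous_arccos.comp <|
    (by fun_prop : Continuous fun ψ => -s / 2 + Real.cos ψ).div (continuous_normC s)
      fun ψ => (normC_pos hs ψ).ne'

theorem normC_mul_cos_argC (s ψ : ℝ) : normC s ψ * Real.cos (argC s ψ) = Real.cos ψ - s / 2 := by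
  have habs : |-s / 2 + Real.cos ψ| ≤ normC s ψ := by
    refine abs_le_of_sq_le_sq ?_ (normC_nonneg _ _)
    rw [normC_sq]
    nlinarith [Real.cos_sq_le_one ψ]
  have hquot : |(-s / 2 + Real.cos ψ) / normC s ψ| ≤ 1 := by
    rw [abs_div, abs_of_nonneg (normC_nonneg s ψ)]
    exact div_le_one_of_le₀ habs (normC_nonneg _ _)
  rw [argC, Real.cos_arccos (abs_le.1 hquot).1 (abs_le.1 hquot).2, mul_div_cancel_of_imp']
  · ring
  · intro h
    rwa [h, abs_nonpos_iff] at habs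

theorem normC_sq_mul_sin_argC_sq (s ψ : ℝ) :
    normC s ψ ^ 2 * Real.sin (argC s ψ) ^ 2 = Real.sin ψ ^ 2 := by
  rw [Real.sin_sq, Real.sin_sq]
  linear_combination normC_sq s ψ
    - (normC s ψ * Real.cos (argC s ψ) + Real.cos ψ - s / 2) * normC_mul_cos_argC s ψ

theorem sin_argC_arccos_two_div {s : ℝ} (hs : 2 < s) :
    Real.sin (argC s (Real.arccos (2 / s))) = 2 / s := by
  have hcos : Real.cos (Real.arccos (2 / s)) = 2 / s :=
    Real.cos_arccos (by linarith [show 0 < 2 / s by positivity])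
      ((div_le_one (by linarith)).2 hs.le)
  have hsin := normC_sq_mul_sin_argC_sq s (Real.arccos (2 / s))
  rw [normC_sq, Real.sin_sq (Real.arccos _), hcos] at hsin
  have hsin_nonneg : 0 ≤ Real.sin (argC s (Real.arccos (2 / s))) :=
    Real.sin_nonneg_of_nonneg_of_le_pi (Real.arccos_nonneg _) (Real.arccos_le_pi _)
  rw [← sq_eq_sq₀ hsin_nonneg (by positivity)]
  refine mul_left_cancel₀ (show s ^ 2 / 4 - 1 ≠ 0 by nlinarith) ?_
  have hs0 : s ≠ 0 := by linarith
  field_simp at hsin ⊢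
  linear_combination hsin

theorem exists_Icc_lt_sin_argC {s r : ℝ} (hs : 2 < s) (hr : r < 2 / s) :
    ∃ p ∈ Set.Ioo 0 (Real.arccos (2 / s)), ∀ ψ ∈ Set.Icc p (Real.arccos (2 / s)),
      r < Real.sin (argC s ψ) := by
  have hsin : ∀ᶠ ψ in nhds (Real.arccos (2 / s)), r < Real.sin (argC s ψ) :=
    (Real.continuous_sin.comp (continuous_argC hs)).continuousAt.eventually_const_lt
      (by simpa only [Function.comp_apply, sin_argC_arccos_two_div hs] using hr)
  have hpos : 0 < Real.arccos (2 / s) := Real.arccos_pos.2 ((div_lt_one (by linarith)).2 hs)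
  obtain ⟨p, hp, hsub⟩ := mem_nhdsLE_iff_exists_Icc_subset.1
    (mem_nhdsWithin_of_mem_nhds (hsin.and (lt_mem_nhds hpos)))
  exact ⟨p, ⟨(hsub (Set.left_mem_Icc.2 hp.le)).2, hp⟩, fun ψ hψ => (hsub hψ).1⟩

theorem normC_zero {s : ℝ} (hs : 2 ≤ s) : normC s 0 = s / 2 - 1 := by
  rw [← sq_eq_sq₀ (normC_nonneg s 0) (by linarith), normC_sq, Real.cos_zero]
  ring

theorem argC_zero {s : ℝ} (hs : 2 < s) : argC s 0 = π := by
  have hC : -s / 2 + Real.cos 0 = -normC s 0 := by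
    rw [normC_zero hs.le, Real.cos_zero]; ring
  rw [argC, hC, neg_div, div_self (normC_pos hs 0).ne', Real.arccos_neg_one]

/-- The point at eccentric anomaly `x` of the ellipse with semi-axes `1` (real) and `|cos τ|`
(imaginary), run through clockwise if `cos τ < 0`. Up to a phase it is the inner product of two
points of a magnetic geodesic, with `τ` the argument of `C_s(ψ)`. -/
def ellipsePoint (τ x : ℝ) : ℂ := Real.cos x + (Real.cos τ * Real.sin x : ℝ) * Complex.I

theorem norm_ellipsePoint_sq (τ x : ℝ) :
    ‖ellipsePoint τ x‖ ^ 2 = 1 - (Real.sin τ * Real.sin x) ^ 2 := by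
  rw [ellipsePoint, Complex.sq_norm, Complex.normSq_add_mul_I]
  linear_combination Real.cos_sq_add_sin_sq x + Real.sin x ^ 2 * Real.cos_sq_add_sin_sq τ

theorem ellipsePoint_add_nat_mul_two_pi (τ x : ℝ) (k : ℕ) :
    ellipsePoint τ (x + k * (2 * π)) = ellipsePoint τ x := by
  rw [ellipsePoint, ellipsePoint, Real.cos_add_nat_mul_two_pi, Real.sin_add_nat_mul_two_pi]

theorem ellipsePoint_eq_exp_add_exp (τ x : ℝ) :
    ellipsePoint τ x = (Real.sin (τ / 2) ^ 2 : ℝ) * Complex.exp (-(x * Complex.I))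
      + (Real.cos (τ / 2) ^ 2 : ℝ) * Complex.exp (x * Complex.I) := by
  have hcos : (Real.cos τ : ℂ) = (Real.cos (τ / 2) ^ 2 : ℝ) - (Real.sin (τ / 2) ^ 2 : ℝ) := by
    rw [← Complex.ofReal_sub, ← Real.cos_two_mul', mul_div_cancel₀ _ two_ne_zero]
  have hone : ((Real.sin (τ / 2) ^ 2 : ℝ) : ℂ) + (Real.cos (τ / 2) ^ 2 : ℝ) = 1 := by
    rw [← Complex.ofReal_add, Real.sin_sq_add_cos_sq, Complex.ofReal_one]
  rw [← neg_mul, Complex.exp_mul_I, Complex.exp_mul_I, Complex.cos_neg, Complex.sin_neg,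
    ellipsePoint, Complex.ofReal_mul, hcos, Complex.ofReal_cos x, Complex.ofReal_sin x]
  linear_combination -Complex.cos x * hone

/-- The value of `inner ℂ (γ 0) (γ t)`, conjugate-linear in `γ 0`, for every magnetic geodesic `γ`
of strength `s` and contact angle `ψ`. -/
def geodesicOverlap (s ψ t : ℝ) : ℂ :=
  Complex.exp ((s / 2 * t : ℝ) * Complex.I) * ellipsePoint (argC s ψ) (normC s ψ * t)

theorem sin_arcsin_div {r σ : ℝ} (hr : 0 ≤ r) (hσ : r < σ) :
    Real.sin (Real.arcsin (r / σ)) = r / σ := by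
  have hσ_pos := hr.trans_lt hσ
  exact Real.sin_arcsin (by linarith [div_nonneg hr hσ_pos.le]) ((div_le_one hσ_pos).2 hσ.le)

theorem norm_ellipsePoint_arcsin_sq {r τ : ℝ} (hr : 0 ≤ r) (hτ : r < Real.sin τ) :
    ‖ellipsePoint τ (Real.arcsin (r / Real.sin τ))‖ ^ 2 = 1 - r ^ 2 := by
  rw [norm_ellipsePoint_sq, sin_arcsin_div hr hτ, mul_div_cancel₀ _ (hr.trans_lt hτ).ne']

theorem ellipsePoint_arcsin_mem_slitPlane {r τ : ℝ} (hr : 0 ≤ r) (hτ : r < Real.sin τ) :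
    ellipsePoint τ (Real.arcsin (r / Real.sin τ)) ∈ Complex.slitPlane := by
  have hτ_pos := hr.trans_lt hτ
  have hcos : 0 < Real.cos (Real.arcsin (r / Real.sin τ)) := Real.cos_pos_of_mem_Ioo
    ⟨by linarith [Real.pi_pos, Real.arcsin_nonneg.2 (div_nonneg hr hτ_pos.le)],
      Real.arcsin_lt_pi_div_two.2 ((div_lt_one hτ_pos).2 hτ)⟩
  left
  simpa [ellipsePoint, -Complex.ofReal_cos, -Complex.ofReal_sin] using hcos

theorem exists_geodesicOverlap_eq_of_norm_sq_eq {s r : ℝ} (hs : 2 < s) (hr_nonneg : 0 ≤ r)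
    (hr : r < 2 / s) {a : ℂ} (ha : ‖a‖ ^ 2 = 1 - r ^ 2) :
    ∃ ψ ∈ Set.Icc 0 π, ∃ t, geodesicOverlap s ψ t = a := by
  obtain ⟨p, ⟨hp_pos, hp_lt⟩, hsin⟩ := exists_Icc_lt_sin_argC hs hr
  set S := Set.Icc p (Real.arccos (2 / s))
  have hS : S ⊆ Set.Icc 0 π := Set.Icc_subset_Icc hp_pos.le (Real.arccos_le_pi _)
  have hp : p ∈ S := Set.left_mem_Icc.2 hp_lt.le
  have htop : Real.arccos (2 / s) ∈ S := Set.right_mem_Icc.2 hp_lt.le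
  have hC_ne (ψ : ℝ) : normC s ψ ≠ 0 := (normC_pos hs ψ).ne'
  have hCcont := (continuous_normC s).continuousOn (s := S)
  set x : ℝ → ℝ := fun ψ => Real.arcsin (r / Real.sin (argC s ψ))
  have hx : ContinuousOn x S := Real.continuous_arcsin.comp_continuousOn <|
    continuousOn_const.div (Real.continuous_sin.comp (continuous_argC hs)).continuousOn
      fun ψ hψ => (hr_nonneg.trans_lt (hsin ψ hψ)).ne'
  have hellipse : ContinuousOn (fun ψ => ellipsePoint (argC s ψ) (x ψ)) S := by
    have hargC := continuous_argC hs
    unfold ellipsePoint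
    fun_prop
  have hnorm (ψ : ℝ) (hψ : ψ ∈ S) : ‖ellipsePoint (argC s ψ) (x ψ)‖ = ‖a‖ := by
    rw [← sq_eq_sq₀ (norm_nonneg _) (norm_nonneg _),
      norm_ellipsePoint_arcsin_sq hr_nonneg (hsin ψ hψ), ha]
  have hperiod : s / 2 * (2 * π / normC s (Real.arccos (2 / s)))
      < s / 2 * (2 * π / normC s p) := by
    have hC_pos := normC_pos hs p
    have hC_lt := strictMonoOn_normC (s := s) (by linarith) (hS hp) (hS htop) hp_lt
    gcongr
  obtain ⟨k, ψ, hψ, hψa⟩ := exists_exp_add_nat_mul_mul_eq isPreconnected_Icc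
    (A := fun ψ => s / 2 * (x ψ / normC s ψ)) (B := fun ψ => s / 2 * (2 * π / normC s ψ))
    (continuousOn_const.mul (hx.div hCcont fun ψ _ => hC_ne ψ))
    (continuousOn_const.mul (continuousOn_const.div hCcont fun ψ _ => hC_ne ψ)) hp htop hperiod
    hellipse (fun ψ hψ => ellipsePoint_arcsin_mem_slitPlane hr_nonneg (hsin ψ hψ)) hnorm
  refine ⟨ψ, hS hψ, (x ψ + k * (2 * π)) / normC s ψ, ?_⟩
  rw [geodesicOverlap, mul_div_cancel₀ _ (hC_ne ψ), ellipsePoint_add_nat_mul_two_pi, ← hψa]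
  ring_nf

theorem exists_geodesicOverlap_eq {s : ℝ} (hs : 2 < s) {a : ℂ} (ha : 1 - 4 / s ^ 2 < ‖a‖ ^ 2)
    (ha_le : ‖a‖ ≤ 1) : ∃ ψ ∈ Set.Icc 0 π, ∃ t, geodesicOverlap s ψ t = a := by
  obtain ⟨r, hr_nonneg, hr_sq⟩ : ∃ r : ℝ, 0 ≤ r ∧ r ^ 2 = 1 - ‖a‖ ^ 2 :=
    ⟨√(1 - ‖a‖ ^ 2), Real.sqrt_nonneg _, Real.sq_sqrt (by nlinarith [norm_nonneg a])⟩
  have hr : r < 2 / s := lt_of_pow_lt_pow_left₀ 2 (by positivity) (by rw [div_pow]; linarith)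
  exact exists_geodesicOverlap_eq_of_norm_sq_eq hs hr_nonneg hr (by linarith)

theorem geodesicOverlap_eq_exp_add_exp (s ψ t : ℝ) : geodesicOverlap s ψ t =
    (Real.sin (argC s ψ / 2) ^ 2 : ℝ) * Complex.exp (Complex.I * (s / 2 - normC s ψ : ℝ) * t) +
    (Real.cos (argC s ψ / 2) ^ 2 : ℝ) * Complex.exp (Complex.I * (s / 2 + normC s ψ : ℝ) * t) := by
  rw [geodesicOverlap, ellipsePoint_eq_exp_add_exp]
  simp only [mul_add, mul_left_comm (Complex.exp _), ← Complex.exp_add]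
  push_cast
  ring_nf

section MagneticCurve

variable {n : ℕ}

theorem magCurve_apply (s ψ : ℝ) (w₀ w₁ : EuclideanSpace ℂ (Fin (n + 1))) (t : ℝ) :
    magCurve s ψ w₀ w₁ t = Complex.exp (Complex.I * (s / 2 - normC s ψ : ℝ) * t) • w₀ +
      Complex.exp (Complex.I * (s / 2 + normC s ψ : ℝ) * t) • w₁ := by
  rw [magCurve, smul_add, smul_smul, smul_smul, ← Complex.exp_add, ← Complex.exp_add]
  push_cast
  ring_nf

theorem magCurve_apply_zero (s ψ : ℝ) (w₀ w₁ : EuclideanSpace ℂ (Fin (n + 1))) :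
    magCurve s ψ w₀ w₁ 0 = w₀ + w₁ := by
  simp [magCurve]

theorem contDiff_magCurve (s ψ : ℝ) (w₀ w₁ : EuclideanSpace ℂ (Fin (n + 1))) {m : WithTop ℕ∞} :
    ContDiff ℝ m (magCurve s ψ w₀ w₁) := by
  have hofReal : ContDiff ℝ m (fun t : ℝ => (t : ℂ)) := Complex.ofRealCLM.contDiff
  unfold magCurve
  fun_prop

theorem deriv_magCurve (s ψ : ℝ) (w₀ w₁ : EuclideanSpace ℂ (Fin (n + 1))) :
    deriv (magCurve s ψ w₀ w₁) = magCurve s ψ ((Complex.I * (s / 2 - normC s ψ : ℝ)) • w₀)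
      ((Complex.I * (s / 2 + normC s ψ : ℝ)) • w₁) := by
  have hexp (c : ℂ) (t : ℝ) :
      HasDerivAt (fun t : ℝ => Complex.exp (c * t)) (Complex.exp (c * t) * c) t := by
    simpa using ((hasDerivAt_id (t : ℂ)).const_mul c).cexp.comp_ofReal
  funext t
  rw [funext (magCurve_apply s ψ w₀ w₁), magCurve_apply, smul_smul, smul_smul]
  exact (((hexp _ t).smul_const w₀).add ((hexp _ t).smul_const w₁)).deriv

theorem deriv_deriv_magCurve_sub_add (s ψ : ℝ) (w₀ w₁ : EuclideanSpace ℂ (Fin (n + 1))) (t : ℝ) :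
    deriv (deriv (magCurve s ψ w₀ w₁)) t - ((s : ℂ) * Complex.I) • deriv (magCurve s ψ w₀ w₁) t
      + ((1 : ℂ) - (s : ℂ) * (Real.cos ψ : ℂ)) • magCurve s ψ w₀ w₁ t = 0 := by
  have hC : (normC s ψ : ℂ) ^ 2 = s ^ 2 / 4 + 1 - s * Complex.cos ψ := by
    exact_mod_cast normC_sq s ψ
  -- The exponents `i (s/2 ± C)` of `magCurve` are the roots of the characteristic polynomial.
  have hroot (ε : ℂ) (hε : ε ^ 2 = 1) : (Complex.I * (s / 2 + ε * normC s ψ)) ^ 2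
      - s * Complex.I * (Complex.I * (s / 2 + ε * normC s ψ)) + (1 - s * Complex.cos ψ) = 0 := by
    linear_combination (ε ^ 2 * normC s ψ ^ 2 - s ^ 2 / 4) * Complex.I_sq - hC - normC s ψ ^ 2 * hε
  have hroot₀ := hroot (-1) (by norm_num)
  have hroot₁ := hroot 1 (by norm_num)
  rw [deriv_magCurve, deriv_magCurve]
  simp only [magCurve_apply]
  match_scalars
  · linear_combination Complex.exp (Complex.I * (s / 2 - normC s ψ) * t) * hroot₀
  · linear_combination Complex.exp (Complex.I * (s / 2 + normC s ψ) * t) * hroot₁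

theorem isMagGeo_magCurve {s ψ : ℝ} {w₀ w₁ : EuclideanSpace ℂ (Fin (n + 1))}
    (hw : inner ℂ w₀ w₁ = 0) (hw₀ : ‖w₀‖ ^ 2 = Real.sin (argC s ψ / 2) ^ 2)
    (hw₁ : ‖w₁‖ ^ 2 = Real.cos (argC s ψ / 2) ^ 2) : IsMagGeo s ψ (magCurve s ψ w₀ w₁) := by
  have hadd : ‖w₀‖ ^ 2 + ‖w₁‖ ^ 2 = 1 := by rw [hw₀, hw₁, Real.sin_sq_add_cos_sq]
  have hsub : normC s ψ * (‖w₁‖ ^ 2 - ‖w₀‖ ^ 2) = Real.cos ψ - s / 2 := by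
    rw [hw₀, hw₁, ← Real.cos_two_mul', mul_div_cancel₀ _ two_ne_zero, normC_mul_cos_argC]
  have hpoint : magCurve s ψ w₀ w₁ 0 = (1 : ℂ) • w₀ + (1 : ℂ) • w₁ := by
    simp only [magCurve_apply_zero, one_smul]
  have hvelocity : deriv (magCurve s ψ w₀ w₁) 0
      = (Complex.I * (s / 2 - normC s ψ : ℝ)) • w₀
        + (Complex.I * (s / 2 + normC s ψ : ℝ)) • w₁ := by
    rw [deriv_magCurve, magCurve_apply_zero]
  have hmean : (s / 2 - normC s ψ) * ‖w₀‖ ^ 2 + (s / 2 + normC s ψ) * ‖w₁‖ ^ 2 = Real.cos ψ := by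
    linear_combination s / 2 * hadd + hsub
  refine ⟨contDiff_magCurve s ψ w₀ w₁, deriv_deriv_magCurve_sub_add s ψ w₀ w₁, ?_, ?_, ?_, ?_⟩
  · rw [← sq_eq_sq₀ (norm_nonneg _) zero_le_one, hpoint,
      norm_sq_smul_add_smul_of_inner_eq_zero hw]
    simpa using hadd
  · rw [← sq_eq_sq₀ (norm_nonneg _) zero_le_one, hvelocity,
      norm_sq_smul_add_smul_of_inner_eq_zero hw]
    simp only [norm_mul, Complex.norm_I, one_mul, Complex.norm_real, Real.norm_eq_abs, sq_abs]
    linear_combination (s ^ 2 / 4 + normC s ψ ^ 2) * hadd + s * hsub + normC_sq s ψ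
  · rw [hvelocity, hpoint, herm, inner_smul_add_smul_of_inner_eq_zero hw]
    simp [← Complex.ofReal_pow, -Complex.ofReal_sub, -Complex.ofReal_add]
  · rw [hvelocity, hpoint, smul_add, smul_smul, smul_smul, herm,
      inner_smul_add_smul_of_inner_eq_zero hw]
    simpa [← Complex.ofReal_pow, -Complex.ofReal_sub, -Complex.ofReal_add, -neg_sub, -neg_add_rev]
      using hmean

theorem magCurve_contactAngle_zero {s : ℝ} (hs : 2 ≤ s) (w : EuclideanSpace ℂ (Fin (n + 1)))
    (t : ℝ) : magCurve s 0 w 0 t = Complex.exp (t * Complex.I) • w := by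
  rw [magCurve_apply, normC_zero hs, smul_zero, add_zero]
  push_cast
  ring_nf

theorem exists_isMagGeo_of_inner_eq_geodesicOverlap {s ψ t : ℝ}
    {q₀ q₁ : EuclideanSpace ℂ (Fin (n + 1))} (hq₀ : ‖q₀‖ = 1) (hq₁ : ‖q₁‖ = 1)
    (hq : inner ℂ q₀ q₁ = geodesicOverlap s ψ t) (hlt : ‖inner ℂ q₀ q₁‖ < 1) :
    ∃ γ, IsMagGeo s ψ γ ∧ γ 0 = q₀ ∧ γ t = q₁ := by
  rw [geodesicOverlap_eq_exp_add_exp] at hq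
  set l₀ := Complex.exp (Complex.I * (s / 2 - normC s ψ : ℝ) * t) with hl₀
  set l₁ := Complex.exp (Complex.I * (s / 2 + normC s ψ : ℝ) * t)
  have hphase (ω : ℝ) : ‖Complex.exp (Complex.I * ω * t)‖ = 1 := by
    rw [mul_assoc, ← Complex.ofReal_mul, Complex.norm_exp_I_mul_ofReal]
  have hweights := Real.sin_sq_add_cos_sq (argC s ψ / 2)
  have hl : l₀ ≠ l₁ := by
    intro h
    rw [← h, ← add_mul, ← Complex.ofReal_add, hweights, Complex.ofReal_one, one_mul] at hq
    exact hlt.ne (by rw [hq, hl₀, hphase])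
  obtain ⟨w₀, w₁, hw, hw₀, hw₁, hadd, hsmul_add⟩ :=
    exists_orthogonal_add_eq_smul_add_smul_eq hq₀ hq₁ (hphase _) (hphase _) hl hweights hq
  exact ⟨magCurve s ψ w₀ w₁, isMagGeo_magCurve hw hw₀ hw₁, by rw [magCurve_apply_zero, hadd],
    by rw [magCurve_apply, hsmul_add]⟩

theorem exists_isMagGeo_contactAngle_zero {s : ℝ} (hs : 2 < s)
    {q₀ q₁ : EuclideanSpace ℂ (Fin (n + 1))} (hq₀ : ‖q₀‖ = 1) (hq₁ : ‖q₁‖ = 1)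
    (hq : ‖inner ℂ q₀ q₁‖ = 1) : ∃ γ, IsMagGeo s 0 γ ∧ ∃ t, γ 0 = q₀ ∧ γ t = q₁ := by
  obtain ⟨c, hc, rfl⟩ := exists_norm_eq_one_smul_eq hq₀ hq₁ hq
  have hargC : argC s 0 / 2 = π / 2 := by rw [argC_zero hs]
  refine ⟨magCurve s 0 q₀ 0, isMagGeo_magCurve (inner_zero_right _) (by simp [hargC, hq₀])
    (by simp [hargC]), c.arg, by rw [magCurve_apply_zero, add_zero], ?_⟩
  rw [magCurve_contactAngle_zero hs.le, ← one_mul (Complex.exp _), ← Complex.ofReal_one, ← hc,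
    Complex.norm_mul_exp_arg_mul_I]

end MagneticCurve

/-- subcritical case `s > 2`, near points: if
`|⟨q₀,q₁⟩| > sqrt(1 − 4/s²)` then `q₀` and `q₁` are connected by a unit-speed
magnetic geodesic of strength `s`. -/
theorem stmt_7 {n : ℕ} (s : ℝ) (hs : 2 < s)
    (q₀ q₁ : EuclideanSpace ℂ (Fin (n + 1)))
    (hq₀ : ‖q₀‖ = 1) (hq₁ : ‖q₁‖ = 1)
    (hfar : Real.sqrt (1 - 4 / s ^ 2) < ‖herm q₀ q₁‖) :
    ∃ ψ ∈ Set.Icc (0 : ℝ) π, ∃ γ : ℝ → EuclideanSpace ℂ (Fin (n + 1)),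
      IsMagGeo s ψ γ ∧ ∃ t₀ t₁ : ℝ, γ t₀ = q₀ ∧ γ t₁ = q₁ := by
  have hfar' : √(1 - 4 / s ^ 2) < ‖inner ℂ q₀ q₁‖ := by rwa [norm_inner_symm]
  have hle : ‖inner ℂ q₀ q₁‖ ≤ 1 := by simpa [hq₀, hq₁] using norm_inner_le_norm (𝕜 := ℂ) q₀ q₁
  rcases hle.lt_or_eq with hlt | heq
  · obtain ⟨ψ, hψ, t, ht⟩ := exists_geodesicOverlap_eq hs (Real.lt_sq_of_sqrt_lt hfar') hle
    obtain ⟨γ, hγ, h₀, h₁⟩ := exists_isMagGeo_of_inner_eq_geodesicOverlap hq₀ hq₁ ht.symm hlt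
    exact ⟨ψ, hψ, γ, hγ, 0, t, h₀, h₁⟩
  · obtain ⟨γ, hγ, t, h₀, h₁⟩ := exists_isMagGeo_contactAngle_zero hs hq₀ hq₁ heq
    exact ⟨0, Set.left_mem_Icc.2 Real.pi_pos.le, γ, hγ, 0, t, h₀, h₁⟩
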